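/- A shellable pure d-dimensional simplicial complex that is not a simplex has geometric realization homotopy equivalent to a wedge of r copies of the d-sphere, where r equals the absolute value of its reduced Euler characteristic. -/

import Mathlib

open scoped Classical

/-- Geometric realization of an abstract simplicial complex with (finite) vertex
set `V`: the set of convex weight functions whose support is a face. -/
def realization {V : Type} [Fintype V] (K : Set (Finset V)) : Set (V → ℝ) :=
  {f | (∀ v, 0 ≤ f v) ∧ (∑ v, f v) = 1 ∧ (Finset.univ.filter fun v => f v ≠ 0) ∈ K}

/-- The base point of the `d`-sphere. -/
noncomputable def spherePt (d : ℕ) :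
    Metric.sphere (0 : EuclideanSpace ℝ (Fin (d + 1))) 1 :=
  ⟨EuclideanSpace.single 0 1, by simp⟩

def IsWedgeBase (r d : ℕ)
    (x : Unit ⊕ (Fin r × Metric.sphere (0 : EuclideanSpace ℝ (Fin (d + 1))) 1)) : Prop :=
  x = Sum.inl () ∨ ∃ i, x = Sum.inr (i, spherePt d)

noncomputable def wedgeSetoid (r d : ℕ) :
    Setoid (Unit ⊕ (Fin r × Metric.sphere (0 : EuclideanSpace ℝ (Fin (d + 1))) 1)) where
  r x y := x = y ∨ (IsWedgeBase r d x ∧ IsWedgeBase r d y)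
  iseqv := by
    constructor
    · intro x; exact Or.inl rfl
    · rintro x y (rfl | ⟨hx, hy⟩); exacts [Or.inl rfl, Or.inr ⟨hy, hx⟩]
    · rintro x y z (rfl | ⟨hx, hy⟩) (rfl | ⟨hy', hz⟩)
      · exact Or.inl rfl
      · exact Or.inr ⟨hy', hz⟩
      · exact Or.inr ⟨hx, hy⟩
      · exact Or.inr ⟨hx, hz⟩

/-- The wedge of `r` copies of the `d`-sphere (a single point when `r = 0`). -/
noncomputable def WedgeOfSpheres (r d : ℕ) : Type := Quotient (wedgeSetoid r d)

noncomputable instance (r d : ℕ) : TopologicalSpace (WedgeOfSpheres r d) :=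
  instTopologicalSpaceQuotient

/-- The Björner–Wachs shelling criterion for an ordering of facets. -/
def IsShellingOrder {V : Type} [DecidableEq V] {t : ℕ} (F : Fin t → Finset V) : Prop :=
  ∀ i k : Fin t, i < k → ∃ j, j < k ∧
    F i ∩ F k ⊆ F j ∩ F k ∧ (F j ∩ F k).card = (F k).card - 1

/-- A facet of `K`: a maximal face. -/
def IsFacet {V : Type} (K : Set (Finset V)) (σ : Finset V) : Prop :=
  σ ∈ K ∧ ∀ τ ∈ K, σ ⊆ τ → σ = τ

open Topology

/-! ### Collapsing the complement of an open set to a point -/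

section Collapse

variable {X Y : Type*}

/-- The map to the one-point compactification which inverts `g` on its range and sends
everything else to infinity. -/
noncomputable def collapse (g : Y → X) (x : X) : OnePoint Y :=
  if h : ∃ y, g y = x then (h.choose : OnePoint Y) else OnePoint.infty

theorem collapse_apply {g : Y → X} (hg : Function.Injective g) (y : Y) :
    collapse g (g y) = y := by
  have h : ∃ y', g y' = g y := ⟨y, rfl⟩
  rw [collapse, dif_pos h, hg h.choose_spec]

theorem collapse_of_notMem {g : Y → X} {x : X} (hx : x ∉ Set.range g) :
    collapse g x = OnePoint.infty :=
  dif_neg hx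

theorem collapse_eq_iff {g : Y → X} (hg : Function.Injective g) {x x' : X} :
    collapse g x = collapse g x' ↔ x = x' ∨ (x ∉ Set.range g ∧ x' ∉ Set.range g) := by
  by_cases hx : x ∈ Set.range g <;> by_cases hx' : x' ∈ Set.range g
  · obtain ⟨y, rfl⟩ := hx
    obtain ⟨y', rfl⟩ := hx'
    simp [collapse_apply hg, hg.eq_iff]
  · obtain ⟨y, rfl⟩ := hx
    have : g y ≠ x' := fun h => hx' ⟨y, h⟩
    simp [collapse_apply hg, collapse_of_notMem hx', this]
  · obtain ⟨y', rfl⟩ := hx'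
    have : x ≠ g y' := fun h => hx ⟨y', h.symm⟩
    simp [collapse_apply hg, collapse_of_notMem hx, this]
  · rw [collapse_of_notMem hx, collapse_of_notMem hx']
    exact iff_of_true rfl (Or.inr ⟨hx, hx'⟩)

theorem collapse_surjective {g : Y → X} (hg : Function.Injective g) {x : X}
    (hx : x ∉ Set.range g) : Function.Surjective (collapse g) := by
  intro z
  induction z using OnePoint.rec with
  | infty => exact ⟨x, collapse_of_notMem hx⟩
  | coe y => exact ⟨g y, collapse_apply hg y⟩

theorem continuous_collapse [TopologicalSpace X] [TopologicalSpace Y] [T2Space X] {g : Y → X}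
    (hg : IsOpenEmbedding g) : Continuous (collapse g) := by
  have key (s : Set (OnePoint Y)) (hs : OnePoint.infty ∉ s) :
      collapse g ⁻¹' s = g '' (OnePoint.some ⁻¹' s) := by
    ext x
    by_cases hx : x ∈ Set.range g
    · obtain ⟨y, rfl⟩ := hx
      simp [collapse_apply hg.injective, hg.injective.eq_iff]
    · rw [Set.mem_preimage, collapse_of_notMem hx]
      exact iff_of_false hs fun h => hx (Set.image_subset_range _ _ h)
  refine continuous_def.2 fun s hs => ?_
  obtain ⟨h1, h2⟩ := OnePoint.isOpen_def.1 hs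
  by_cases hinf : OnePoint.infty ∈ s
  · rw [← isClosed_compl_iff, ← Set.preimage_compl, key _ (by simpa using hinf)]
    exact ((h1 hinf).image hg.continuous).isClosed
  · rw [key s hinf]
    exact hg.isOpenMap _ h2

end Collapse

/-- If a subset `A` of a compact space `X` can be deformed to a point inside `A` by an ambient
deformation of `X`, then `X` is homotopy equivalent to the quotient `X / A`. -/
theorem nonempty_homotopyEquiv_of_deformation {X W : Type*} [TopologicalSpace X]
    [TopologicalSpace W] [CompactSpace X] [T2Space W] {A : Set X} (q : C(X, W))
    (hq : Function.Surjective q) (hqA : ∀ x y, q x = q y ↔ x = y ∨ (x ∈ A ∧ y ∈ A))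
    (H : C(unitInterval × X, X)) (H_zero : ∀ x, H (0, x) = x)
    (H_mem : ∀ t, ∀ x ∈ A, H (t, x) ∈ A) (p : X) (H_one : ∀ x ∈ A, H (1, x) = p) :
    Nonempty (ContinuousMap.HomotopyEquiv X W) := by
  have hQ : IsQuotientMap q := q.continuous.isClosedMap.isQuotientMap q.continuous hq
  let q' : C(unitInterval × X, unitInterval × W) := (ContinuousMap.id _).prodMap q
  have hQ' : IsQuotientMap q' := q'.continuous.isClosedMap.isQuotientMap q'.continuous
    (Function.surjective_id.prodMap hq)
  let H₁ : C(X, X) := H.comp ⟨fun x => (1, x), by fun_prop⟩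
  have hH₁ : Function.FactorsThrough H₁ q := by
    intro x y hxy
    rcases (hqA x y).1 hxy with rfl | ⟨hx, hy⟩
    · rfl
    · exact (H_one x hx).trans (H_one y hy).symm
  have hqH : Function.FactorsThrough (q.comp H) q' := by
    rintro ⟨s, x⟩ ⟨t, y⟩ hxy
    obtain ⟨rfl, hxy'⟩ : s = t ∧ q x = q y := Prod.ext_iff.1 hxy
    rcases (hqA x y).1 hxy' with rfl | ⟨hx, hy⟩
    · rfl
    · exact (hqA _ _).2 (Or.inr ⟨H_mem s x hx, H_mem s y hy⟩)
  let g : C(W, X) := hQ.lift H₁ hH₁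
  let G : C(unitInterval × W, W) := hQ'.lift (q.comp H) hqH
  have hg (x : X) : g (q x) = H (1, x) := DFunLike.congr_fun (hQ.lift_comp H₁ hH₁) x
  have hG (t : unitInterval) (x : X) : G (t, q x) = q (H (t, x)) :=
    DFunLike.congr_fun (hQ'.lift_comp (q.comp H) hqH) (t, x)
  refine ⟨⟨q, g, ContinuousMap.Homotopic.symm ⟨⟨H, H_zero, fun x => (hg x).symm⟩⟩,
    ContinuousMap.Homotopic.symm ⟨⟨G, fun w => ?_, fun w => ?_⟩⟩⟩⟩
  · obtain ⟨x, rfl⟩ := hq w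
    exact (hG 0 x).trans (by rw [H_zero]; rfl)
  · obtain ⟨x, rfl⟩ := hq w
    exact (hG 1 x).trans (by rw [← hg]; rfl)

/-! ### The wedge of spheres as a one-point compactification -/

theorem exists_isOpenEmbedding_range_eq_compl_spherePt (d : ℕ) :
    ∃ g : EuclideanSpace ℝ (Fin d) → Metric.sphere (0 : EuclideanSpace ℝ (Fin (d + 1))) 1,
      IsOpenEmbedding g ∧ Set.range g = {spherePt d}ᶜ := by
  have : Fact (Module.finrank ℝ (EuclideanSpace ℝ (Fin (d + 1))) = d + 1) := ⟨by simp⟩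
  let e := (stereographic' d (spherePt d)).symm
  have he : e.source = Set.univ := stereographic'_target (spherePt d)
  refine ⟨e, e.isOpenEmbedding he, ?_⟩
  rw [← Set.image_univ, ← he, e.image_source_eq_target]
  exact stereographic'_source (spherePt d)

theorem nonempty_wedgeOfSpheres_homeomorph (r d : ℕ) :
    Nonempty (WedgeOfSpheres r d ≃ₜ OnePoint (Fin r × EuclideanSpace ℝ (Fin d))) := by
  obtain ⟨g, hg, hgr⟩ := exists_isOpenEmbedding_range_eq_compl_spherePt d
  let g' : Fin r × EuclideanSpace ℝ (Fin d) →
      Unit ⊕ (Fin r × Metric.sphere (0 : EuclideanSpace ℝ (Fin (d + 1))) 1) :=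
    Sum.inr ∘ Prod.map id g
  have hg' : IsOpenEmbedding g' := IsOpenEmbedding.inr.comp (IsOpenEmbedding.id.prodMap hg)
  have hrange (x) : x ∉ Set.range g' ↔ IsWedgeBase r d x := by
    rcases x with x | ⟨i, s⟩
    · simp [g', IsWedgeBase]
    · have hs : s ∈ Set.range g ↔ s ≠ spherePt d := by simp [hgr]
      have : Sum.inr (i, s) ∈ Set.range g' ↔ s ∈ Set.range g := by
        simp [g']
      rw [this, hs]
      simp [IsWedgeBase]
  have hc (x y) : collapse g' x = collapse g' y ↔ wedgeSetoid r d x y := by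
    rw [collapse_eq_iff hg'.injective, hrange, hrange]
    rfl
  let f : WedgeOfSpheres r d → OnePoint (Fin r × EuclideanSpace ℝ (Fin d)) :=
    Quotient.lift (collapse g') fun x y h => (hc x y).2 h
  have hf : Continuous f := (continuous_collapse hg').quotient_lift _
  have hinj : Function.Injective f := by
    intro x y
    induction x, y using Quotient.inductionOn₂ with
    | h x y => exact fun h => Quotient.sound ((hc x y).1 h)
  have hsurj : Function.Surjective f := by
    intro z
    obtain ⟨x, hx⟩ := collapse_surjective hg'.injective
      ((hrange (Sum.inl ())).2 (Or.inl rfl)) z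
    exact ⟨Quotient.mk _ x, hx⟩
  have : CompactSpace (WedgeOfSpheres r d) := inferInstanceAs (CompactSpace (Quotient _))
  exact ⟨Continuous.homeoOfEquivCompactToT2 (f := Equiv.ofBijective f ⟨hinj, hsurj⟩) hf⟩

/-! ### Logarithmic coordinates on open simplices -/

section CellPoint

variable {V : Type} {d : ℕ} {σ : Finset V} (e : σ ≃ Fin (d + 1))

/-- The point of the open simplex `σ` with given logarithmic coordinates. -/
noncomputable def cellPoint (y : EuclideanSpace ℝ (Fin d)) (v : V) : ℝ :=
  if h : v ∈ σ then
    Real.exp ((Fin.cons 0 y.ofLp : Fin (d + 1) → ℝ) (e ⟨v, h⟩)) /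
      ∑ j, Real.exp ((Fin.cons 0 y.ofLp : Fin (d + 1) → ℝ) j)
  else 0

/-- Logarithmic coordinates on the open simplex `σ`. -/
noncomputable def cellCoord (x : V → ℝ) : EuclideanSpace ℝ (Fin d) :=
  WithLp.toLp 2 fun j => Real.log (x (e.symm j.succ)) - Real.log (x (e.symm 0))

theorem cellPoint_of_notMem (y : EuclideanSpace ℝ (Fin d)) {v : V} (hv : v ∉ σ) :
    cellPoint e y v = 0 :=
  dif_neg hv

theorem cellPoint_symm (y : EuclideanSpace ℝ (Fin d)) (j : Fin (d + 1)) :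
    cellPoint e y (e.symm j) = Real.exp ((Fin.cons 0 y.ofLp : Fin (d + 1) → ℝ) j) /
      ∑ j, Real.exp ((Fin.cons 0 y.ofLp : Fin (d + 1) → ℝ) j) := by
  simp [cellPoint]

theorem cellPoint_pos (y : EuclideanSpace ℝ (Fin d)) {v : V} (hv : v ∈ σ) :
    0 < cellPoint e y v := by
  rw [cellPoint, dif_pos hv]
  positivity

theorem continuous_cellPoint : Continuous (cellPoint e) := by
  refine continuous_pi fun v => ?_
  by_cases hv : v ∈ σ
  · have hcons : Continuous fun y : EuclideanSpace ℝ (Fin d) =>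
        (Fin.cons 0 y.ofLp : Fin (d + 1) → ℝ) :=
      continuous_const.finCons (PiLp.continuous_ofLp 2 _)
    simp only [cellPoint, dif_pos hv]
    refine Continuous.div ?_ ?_ fun y => by positivity
    · exact Real.continuous_exp.comp ((continuous_apply _).comp hcons)
    · exact continuous_finsetSum _ fun j _ =>
        Real.continuous_exp.comp ((continuous_apply _).comp hcons)
  · simp only [cellPoint, dif_neg hv]
    exact continuous_const

theorem continuousOn_cellCoord : ContinuousOn (cellCoord e) {x | ∀ v ∈ σ, 0 < x v} := by
  refine (PiLp.continuous_toLp 2 _).comp_continuousOn (continuousOn_pi.2 fun j => ?_)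
  exact ((continuous_apply _).continuousOn.log fun x hx => (hx _ (e.symm _).2).ne').sub
    ((continuous_apply _).continuousOn.log fun x hx => (hx _ (e.symm _).2).ne')

theorem cellCoord_cellPoint (y : EuclideanSpace ℝ (Fin d)) :
    cellCoord e (cellPoint e y) = y := by
  ext j
  have hS : ∑ j, Real.exp ((Fin.cons 0 y.ofLp : Fin (d + 1) → ℝ) j) ≠ 0 := by positivity
  simp only [cellCoord, cellPoint_symm]
  rw [Real.log_div (Real.exp_ne_zero _) hS, Real.log_div (Real.exp_ne_zero _) hS]
  simp

end CellPoint

/-! ### Shifting weight towards a vertex -/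

section ShiftWeight

variable {V : Type}

/-- Shift weight from all the vertices of `R` to the vertex `w` until the weight at some vertex
of `R` vanishes. -/
noncomputable def shiftWeight (R : Finset V) (hR : R.Nonempty) (w : V) (x : V → ℝ) : V → ℝ :=
  fun v => x v + R.inf' hR x * ((if v = w then (R.card : ℝ) else 0) - if v ∈ R then 1 else 0)

theorem continuous_shiftWeight (R : Finset V) (hR : R.Nonempty) (w : V) :
    Continuous (shiftWeight R hR w) := by
  have h : Continuous fun x : V → ℝ => R.inf' hR x :=
    Continuous.finset_inf'_apply hR fun v _ => continuous_apply v
  unfold shiftWeight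
  fun_prop

end ShiftWeight

/-! ### Geometric realizations -/

section Realization

variable {V : Type} [Fintype V]

/-- The support of a weight function. -/
noncomputable def weightSupport (x : V → ℝ) : Finset V := Finset.univ.filter fun v => x v ≠ 0

@[simp]
theorem mem_weightSupport {x : V → ℝ} {v : V} : v ∈ weightSupport x ↔ x v ≠ 0 := by
  simp [weightSupport]

theorem mem_realization {K : Set (Finset V)} {x : V → ℝ} :
    x ∈ realization K ↔ (∀ v, 0 ≤ x v) ∧ (∑ v, x v) = 1 ∧ weightSupport x ∈ K :=
  Iff.rfl

/-- The closed simplex spanned by a set of vertices. -/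
def closedSimplex (τ : Finset V) : Set (V → ℝ) := realization {σ | σ ⊆ τ}

theorem mem_closedSimplex {τ : Finset V} {x : V → ℝ} :
    x ∈ closedSimplex τ ↔ (∀ v, 0 ≤ x v) ∧ (∑ v, x v) = 1 ∧ ∀ v ∉ τ, x v = 0 := by
  simp only [closedSimplex, mem_realization, Set.mem_ofPred_eq, Finset.subset_iff,
    mem_weightSupport]
  exact and_congr_right fun _ => and_congr_right fun _ => forall_congr' fun _ => not_imp_comm

theorem realization_mono {K L : Set (Finset V)} (h : K ⊆ L) : realization K ⊆ realization L :=
  fun _ hx => ⟨hx.1, hx.2.1, h hx.2.2⟩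

theorem closedSimplex_subset_realization {K : Set (Finset V)}
    (hK : ∀ σ ∈ K, ∀ τ ⊆ σ, τ ∈ K) {τ : Finset V} (hτ : τ ∈ K) :
    closedSimplex τ ⊆ realization K :=
  realization_mono fun σ hσ => hK τ hτ σ hσ

theorem isClosed_closedSimplex (τ : Finset V) : IsClosed (closedSimplex τ) := by
  have : closedSimplex τ = stdSimplex ℝ V ∩ ⋂ v ∈ (τ : Set V)ᶜ, {x | x v = 0} := by
    ext x
    simp [mem_closedSimplex, stdSimplex, and_assoc]
  rw [this]
  exact (isClosed_stdSimplex ℝ V).inter <| isClosed_biInter fun v _ =>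
    isClosed_eq (continuous_apply v) continuous_const

theorem isCompact_realization {K : Set (Finset V)} (hK : ∀ σ ∈ K, ∀ τ ⊆ σ, τ ∈ K) :
    IsCompact (realization K) := by
  refine (isCompact_stdSimplex ℝ V).of_isClosed_subset ?_ fun x hx => ⟨hx.1, hx.2.1⟩
  have : realization K = ⋃ σ ∈ K, closedSimplex σ := by
    ext x
    simp only [Set.mem_iUnion, exists_prop]
    exact ⟨fun hx => ⟨weightSupport x, hx.2.2, hx.1, hx.2.1, Finset.Subset.refl _⟩,
      fun ⟨σ, hσ, hx⟩ => closedSimplex_subset_realization hK hσ hx⟩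
  rw [this]
  exact K.toFinite.isClosed_biUnion fun σ _ => isClosed_closedSimplex σ

/-! ### Open simplices are Euclidean cells -/

section Cell

variable {d : ℕ} {σ : Finset V} (e : σ ≃ Fin (d + 1))

theorem sum_eq_sum_cell {x : V → ℝ} (hx : ∀ v ∉ σ, x v = 0) :
    ∑ v, x v = ∑ j, x (e.symm j) := by
  rw [Equiv.sum_comp e.symm fun v : σ => x v, Finset.sum_coe_sort σ x]
  exact (Finset.sum_subset σ.subset_univ fun v _ hv => hx v hv).symm

theorem weightSupport_cellPoint (y : EuclideanSpace ℝ (Fin d)) :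
    weightSupport (cellPoint e y) = σ := by
  ext v
  by_cases hv : v ∈ σ
  · simp [hv, (cellPoint_pos e y hv).ne']
  · simp [hv, cellPoint_of_notMem e y hv]

theorem cellPoint_mem_realization {K : Set (Finset V)} (hσ : σ ∈ K)
    (y : EuclideanSpace ℝ (Fin d)) : cellPoint e y ∈ realization K := by
  refine ⟨fun v => ?_, ?_, ?_⟩
  · by_cases hv : v ∈ σ
    · exact (cellPoint_pos e y hv).le
    · exact (cellPoint_of_notMem e y hv).ge
  · rw [sum_eq_sum_cell e fun v => cellPoint_of_notMem e y]
    simp only [cellPoint_symm]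
    rw [← Finset.sum_div]
    exact div_self (by positivity)
  · rw [← weightSupport_cellPoint e y] at hσ
    exact hσ

theorem cellPoint_cellCoord {x : V → ℝ} (hx : ∀ v, 0 ≤ x v) (hsum : ∑ v, x v = 1)
    (hsupp : weightSupport x = σ) : cellPoint e (cellCoord e x) = x := by
  have hzero (v : V) (hv : v ∉ σ) : x v = 0 := by simpa [← hsupp] using hv
  have hpos (j : Fin (d + 1)) : 0 < x (e.symm j) := by
    refine (hx _).lt_of_ne' (mem_weightSupport.1 ?_)
    rw [hsupp]
    exact (e.symm j).2
  have hexp (j : Fin (d + 1)) :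
      Real.exp ((Fin.cons 0 (cellCoord e x).ofLp : Fin (d + 1) → ℝ) j) =
        x (e.symm j) / x (e.symm 0) := by
    refine Fin.cases ?_ (fun j => ?_) j
    · simp [div_self (hpos 0).ne']
    · simp [cellCoord, Real.exp_sub, Real.exp_log (hpos _)]
  ext v
  by_cases hv : v ∈ σ
  · obtain ⟨j, hj⟩ : ∃ j, e.symm j = ⟨v, hv⟩ := ⟨e ⟨v, hv⟩, by simp⟩
    obtain rfl : (e.symm j : V) = v := by rw [hj]
    rw [cellPoint_symm]
    simp only [hexp]
    rw [← Finset.sum_div, ← sum_eq_sum_cell e hzero, hsum,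
      div_div_div_cancel_right₀ (hpos 0).ne', div_one]
  · rw [cellPoint_of_notMem e _ hv, hzero v hv]

theorem isOpenMap_cellPoint {K : Set (Finset V)} (hσ : IsFacet K σ) :
    IsOpenMap fun y => (⟨cellPoint e y, cellPoint_mem_realization e hσ.1 y⟩ : realization K) := by
  intro U hU
  have hT : IsOpen {x : V → ℝ | ∀ v ∈ σ, 0 < x v} := by
    simp only [Set.ofPred_forall]
    exact isOpen_biInter_finset fun v _ => isOpen_lt continuous_const (continuous_apply v)
  have hopen := (continuousOn_cellCoord e).isOpen_inter_preimage hT hU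
  convert hopen.preimage (continuous_subtype_val : Continuous (Subtype.val : realization K → _))
    using 1
  ext ⟨x, hx⟩
  constructor
  · rintro ⟨y, hy, hyx⟩
    obtain rfl : cellPoint e y = x := congrArg Subtype.val hyx
    exact ⟨fun v => cellPoint_pos e y, by simpa [cellCoord_cellPoint] using hy⟩
  · rintro ⟨hpos, hU⟩
    have hsub : σ ⊆ weightSupport x := fun v hv => mem_weightSupport.2 (hpos v hv).ne'
    exact ⟨cellCoord e x, hU, Subtype.ext <|
      cellPoint_cellCoord e hx.1 hx.2.1 (hσ.2 _ hx.2.2 hsub).symm⟩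

end Cell

/-- The open simplices of a family of distinct `d`-dimensional facets are disjoint open
Euclidean cells in the realization. -/
theorem exists_isOpenEmbedding_cells {K : Set (Finset V)} {r d : ℕ} (G : Fin r → Finset V)
    (hG : Function.Injective G) (hfacet : ∀ i, IsFacet K (G i)) (hcard : ∀ i, (G i).card = d + 1) :
    ∃ g : Fin r × EuclideanSpace ℝ (Fin d) → realization K, IsOpenEmbedding g ∧
      ∀ x, x ∈ Set.range g ↔ ∃ i, G i = weightSupport x.1 := by
  let e (i : Fin r) : G i ≃ Fin (d + 1) := Finset.equivFinOfCardEq (hcard i)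
  let g (z : Fin r × EuclideanSpace ℝ (Fin d)) : realization K :=
    ⟨cellPoint (e z.1) z.2, cellPoint_mem_realization (e z.1) (hfacet z.1).1 z.2⟩
  refine ⟨g, .of_continuous_injective_isOpenMap ?_ ?_ ?_, fun x => ⟨?_, ?_⟩⟩
  · exact continuous_prod_of_discrete_left.2 fun i => (continuous_cellPoint (e i)).subtype_mk _
  · rintro ⟨i, y⟩ ⟨j, z⟩ h
    have h' : cellPoint (e i) y = cellPoint (e j) z := congrArg Subtype.val h
    obtain rfl : i = j := hG <| by
      rw [← weightSupport_cellPoint (e i) y, h', weightSupport_cellPoint]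
    rw [← cellCoord_cellPoint (e i) y, h', cellCoord_cellPoint]
  · exact isOpenMap_prod_of_discrete_left.2 fun i => isOpenMap_cellPoint (e i) (hfacet i)
  · rintro ⟨z, rfl⟩
    exact ⟨z.1, (weightSupport_cellPoint (e z.1) z.2).symm⟩
  · rintro ⟨i, hi⟩
    exact ⟨(i, cellCoord (e i) x.1), Subtype.ext <|
      cellPoint_cellCoord (e i) x.2.1 x.2.2.1 hi.symm⟩

/-! ### Ambient deformations -/

theorem convex_closedSimplex (τ : Finset V) : Convex ℝ (closedSimplex τ) := by
  intro x hx y hy a b ha hb hab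
  rw [mem_closedSimplex] at *
  refine ⟨fun v => ?_, ?_, fun v hv => ?_⟩
  · exact add_nonneg (mul_nonneg ha (hx.1 v)) (mul_nonneg hb (hy.1 v))
  · simp [Finset.sum_add_distrib, ← Finset.mul_sum, hx.2.1, hy.2.1, hab]
  · simp [hx.2.2 v hv, hy.2.2 v hv]

theorem mem_closedSimplex_weightSupport {x : V → ℝ} (hx : x ∈ stdSimplex ℝ V) :
    x ∈ closedSimplex (weightSupport x) :=
  ⟨hx.1, hx.2, Finset.Subset.refl _⟩

/-- The total weight outside of `τ`. -/
noncomputable def outerMass (τ : Finset V) (x : V → ℝ) : ℝ := ∑ v ∈ τᶜ, x v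

/-- The factor by which weights outside of `τ` are scaled when squeezing towards `τ`. -/
noncomputable def outerScale (τ : Finset V) (x : V → ℝ) : ℝ :=
  max 0 (min 1 (4 * outerMass τ x - 1))

/-- Push a neighbourhood of the closed simplex `τ` onto `τ`, keeping each closed simplex
invariant. -/
noncomputable def squeeze (τ : Finset V) (x : V → ℝ) (v : V) : ℝ :=
  if v ∈ τ then
    x v * (1 + (1 - outerScale τ x) * outerMass τ x / max (1 - outerMass τ x) (1 / 2))
  else outerScale τ x * x v

theorem continuous_outerMass (τ : Finset V) : Continuous (outerMass τ) :=
  continuous_finsetSum _ fun v _ => continuous_apply v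

theorem continuous_outerScale (τ : Finset V) : Continuous (outerScale τ) := by
  have := continuous_outerMass τ
  unfold outerScale
  fun_prop

theorem continuous_squeeze (τ : Finset V) : Continuous (squeeze τ) := by
  have h1 := continuous_outerMass τ
  have h2 := continuous_outerScale τ
  refine continuous_pi fun v => ?_
  have h3 : ∀ x, max (1 - outerMass τ x) (1 / 2) ≠ 0 := fun x =>
    (lt_max_of_lt_right (by norm_num)).ne'
  by_cases hv : v ∈ τ
  · simp only [squeeze, if_pos hv]
    fun_prop (disch := assumption)
  · simp only [squeeze, if_neg hv]
    fun_prop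

theorem outerMass_eq_zero {τ : Finset V} {x : V → ℝ} (hx : x ∈ closedSimplex τ) :
    outerMass τ x = 0 :=
  Finset.sum_eq_zero fun v hv => (mem_closedSimplex.1 hx).2.2 v (by simpa using hv)

theorem squeeze_eq_self {τ : Finset V} {x : V → ℝ} (hx : x ∈ closedSimplex τ) :
    squeeze τ x = x := by
  ext v
  by_cases hv : v ∈ τ
  · simp [squeeze, hv, outerMass_eq_zero hx]
  · simp [squeeze, hv, (mem_closedSimplex.1 hx).2.2 v hv]

theorem outerMass_nonneg (τ : Finset V) {x : V → ℝ} (hx : x ∈ stdSimplex ℝ V) :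
    0 ≤ outerMass τ x :=
  Finset.sum_nonneg fun v _ => hx.1 v

theorem squeeze_mem (τ : Finset V) {x : V → ℝ} (hx : x ∈ stdSimplex ℝ V) :
    squeeze τ x ∈ closedSimplex (weightSupport x) := by
  have hu := outerMass_nonneg τ hx
  have hinner : ∑ v ∈ τ, x v = 1 - outerMass τ x := by
    rw [outerMass, ← hx.2, ← Finset.sum_add_sum_compl τ]
    ring
  have hl0 : 0 ≤ outerScale τ x := le_max_left _ _
  have hl1 : outerScale τ x ≤ 1 := max_le zero_le_one (min_le_left _ _)
  refine mem_closedSimplex.2 ⟨fun v => ?_, ?_, fun v hv => ?_⟩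
  · by_cases hv : v ∈ τ
    · rw [squeeze, if_pos hv]
      have h1 : 0 ≤ 1 - outerScale τ x := by linarith
      have h2 : 0 ≤ max (1 - outerMass τ x) (1 / 2) := le_max_of_le_right (by norm_num)
      exact mul_nonneg (hx.1 v) (by positivity)
    · rw [squeeze, if_neg hv]
      exact mul_nonneg hl0 (hx.1 v)
  · rw [← Finset.sum_add_sum_compl τ]
    have h1 : ∑ v ∈ τ, squeeze τ x v = (1 - outerMass τ x) *
        (1 + (1 - outerScale τ x) * outerMass τ x / max (1 - outerMass τ x) (1 / 2)) := by
      refine (Finset.sum_congr rfl fun v hv => if_pos hv).trans ?_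
      rw [← Finset.sum_mul, hinner]
    have h2 : ∑ v ∈ τᶜ, squeeze τ x v = outerScale τ x * outerMass τ x := by
      exact (Finset.sum_congr rfl fun v hv => if_neg (Finset.mem_compl.1 hv)).trans
        (Finset.mul_sum _ _ _).symm
    rw [h1, h2]
    rcases le_or_gt (outerMass τ x) (1 / 2) with h | h
    · rw [max_eq_left (by linarith)]
      have : 1 - outerMass τ x ≠ 0 := by linarith
      field_simp
      ring
    · have : outerScale τ x = 1 := by
        rw [outerScale, min_eq_left (by linarith), max_eq_right zero_le_one]
      rw [this]
      ring
  · have : x v = 0 := by simpa using hv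
    simp [squeeze, this]

theorem squeeze_mem_closedSimplex {τ : Finset V} {x : V → ℝ} (hx : x ∈ stdSimplex ℝ V)
    (hu : outerMass τ x ≤ 1 / 4) : squeeze τ x ∈ closedSimplex τ := by
  have h := mem_closedSimplex.1 (squeeze_mem τ hx)
  have hl : outerScale τ x = 0 :=
    max_eq_left (min_le_of_right_le (by linarith))
  exact mem_closedSimplex.2 ⟨h.1, h.2.1, fun v hv => by rw [squeeze, if_neg hv, hl, zero_mul]⟩

/-- A self-map `φ` of a closed simplex `τ` extends to an ambient deformation which preserves
every complex containing `τ`. -/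
theorem exists_deformation_extending (τ : Finset V) {φ : (V → ℝ) → V → ℝ} (hφ : Continuous φ)
    (hφτ : Set.MapsTo φ (closedSimplex τ) (closedSimplex τ)) :
    ∃ H : ℝ × (V → ℝ) → V → ℝ, Continuous H ∧ (∀ x, H (0, x) = x) ∧
      (∀ K : Set (Finset V), (∀ σ ∈ K, ∀ τ ⊆ σ, τ ∈ K) → τ ∈ K → ∀ t ∈ Set.Icc (0 : ℝ) 1,
        ∀ x ∈ realization K, H (t, x) ∈ realization K) ∧
      (∀ x ∈ closedSimplex τ, H (1, x) = φ x) ∧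
      ∀ x ∈ stdSimplex ℝ V, ∃ y ∈ closedSimplex (weightSupport x),
        H (1, x) = y ∨ (y ∈ closedSimplex τ ∧ ∃ s : ℝ, H (1, x) = y + s • (φ y - y)) := by
  let s (x : V → ℝ) : ℝ := max (1 - 4 * outerMass τ x) 0
  let H (z : ℝ × (V → ℝ)) : V → ℝ :=
    z.2 + min (2 * z.1) 1 • (squeeze τ z.2 - z.2) +
      (max (2 * z.1 - 1) 0 * s z.2) • (φ (squeeze τ z.2) - squeeze τ z.2)
  have hH₁ (x : V → ℝ) :
      H (1, x) = squeeze τ x + s x • (φ (squeeze τ x) - squeeze τ x) := by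
    have h1 : min (2 * (1 : ℝ)) 1 = 1 := by norm_num
    have h2 : max (2 * (1 : ℝ) - 1) 0 = 1 := by norm_num
    simp only [H, h1, h2, one_smul, one_mul, add_sub_cancel]
  have hs (x : V → ℝ) (hx : x ∈ stdSimplex ℝ V) : s x = 0 ∨ squeeze τ x ∈ closedSimplex τ := by
    rcases le_total (outerMass τ x) (1 / 4) with h | h
    · exact Or.inr (squeeze_mem_closedSimplex hx h)
    · exact Or.inl (max_eq_right (by linarith))
  refine ⟨H, ?_, fun x => ?_, fun K hK hτ t ht x hx => ?_, fun x hx => ?_, fun x hx => ?_⟩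
  · have h1 := continuous_squeeze τ
    have h2 := continuous_outerMass τ
    fun_prop
  · simp [H]
  · have hx' : x ∈ stdSimplex ℝ V := ⟨hx.1, hx.2.1⟩
    rcases le_or_gt t (1 / 2) with h | h
    · have h1 : max (2 * t - 1) 0 = 0 := max_eq_right (by linarith)
      have h2 : min (2 * t) 1 = 2 * t := min_eq_left (by linarith)
      simp only [H, h1, h2, zero_mul, zero_smul, add_zero]
      exact closedSimplex_subset_realization hK hx.2.2 <|
        (convex_closedSimplex _).add_smul_sub_mem (mem_closedSimplex_weightSupport hx')
          (squeeze_mem τ hx') ⟨by linarith [ht.1], by linarith⟩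
    · have h1 : max (2 * t - 1) 0 = 2 * t - 1 := max_eq_left (by linarith)
      have h2 : min (2 * t) 1 = 1 := min_eq_right (by linarith)
      simp only [H, h1, h2, one_smul, add_sub_cancel]
      rcases hs x hx' with h0 | h0
      · rw [h0, mul_zero, zero_smul, add_zero]
        exact closedSimplex_subset_realization hK hx.2.2 (squeeze_mem τ hx')
      · have hs0 : 0 ≤ s x := le_max_right _ _
        have hs1 : s x ≤ 1 := max_le (by linarith [outerMass_nonneg τ hx']) zero_le_one
        exact closedSimplex_subset_realization hK hτ <|
          (convex_closedSimplex _).add_smul_sub_mem h0 (hφτ h0)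
            ⟨mul_nonneg (by linarith) hs0, mul_le_one₀ (by linarith [ht.2]) hs0 hs1⟩
  · rw [hH₁, squeeze_eq_self hx]
    simp [s, outerMass_eq_zero hx]
  · refine ⟨squeeze τ x, squeeze_mem τ hx, ?_⟩
    rcases hs x hx with h0 | h0
    · left
      rw [hH₁, h0, zero_smul, add_zero]
    · exact Or.inr ⟨h0, s x, hH₁ x⟩

/-- There is a deformation of `K`, preserving `K'`, which contracts `L` to a point. -/
def ContractsWithin (K K' L : Set (Finset V)) : Prop :=
  ∃ (H : ℝ × (V → ℝ) → V → ℝ) (p : V → ℝ), Continuous H ∧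
    (∀ x ∈ realization K, H (0, x) = x) ∧
    (∀ t ∈ Set.Icc (0 : ℝ) 1, ∀ x ∈ realization K, H (t, x) ∈ realization K) ∧
    (∀ t ∈ Set.Icc (0 : ℝ) 1, ∀ x ∈ realization K', H (t, x) ∈ realization K') ∧
    ∀ x ∈ realization L, H (1, x) = p

theorem contractsWithin_simplex {K K' L : Set (Finset V)} (hK : ∀ σ ∈ K, ∀ τ ⊆ σ, τ ∈ K)
    (hK' : ∀ σ ∈ K', ∀ τ ⊆ σ, τ ∈ K') {τ : Finset V} (hτK : τ ∈ K) (hτK' : τ ∈ K')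
    (hne : τ.Nonempty) (hL : ∀ σ ∈ L, σ ⊆ τ) : ContractsWithin K K' L := by
  obtain ⟨w, hw⟩ := hne
  have hp : (Pi.single w 1 : V → ℝ) ∈ closedSimplex τ := by
    refine mem_closedSimplex.2
      ⟨(single_mem_stdSimplex ℝ w).1, (single_mem_stdSimplex ℝ w).2, fun v hv => ?_⟩
    exact Pi.single_eq_of_ne (fun h : v = w => hv (h ▸ hw)) _
  obtain ⟨H, hH, H_zero, H_mem, H_one, -⟩ := exists_deformation_extending τ
    (φ := fun _ => Pi.single w 1) continuous_const fun _ _ => hp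
  exact ⟨H, Pi.single w 1, hH, fun x _ => H_zero x, H_mem K hK hτK, H_mem K' hK' hτK',
    fun x hx => H_one x (realization_mono hL hx)⟩

theorem shiftWeight_mem {R τ : Finset V} (hR : R.Nonempty) {w : V} (hRτ : R ⊆ τ) (hw : w ∈ τ)
    {x : V → ℝ} (hx : x ∈ closedSimplex τ) : shiftWeight R hR w x ∈ closedSimplex τ := by
  rw [mem_closedSimplex] at hx ⊢
  have h0 : 0 ≤ R.inf' hR x := Finset.le_inf' _ _ fun v _ => hx.1 v
  refine ⟨fun v => ?_, ?_, fun v hv => ?_⟩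
  · have h1 : 0 ≤ R.inf' hR x * (if v = w then (R.card : ℝ) else 0) :=
      mul_nonneg h0 (by split_ifs <;> positivity)
    have h2 : R.inf' hR x * (if v ∈ R then 1 else 0) ≤ x v := by
      split_ifs with h
      · rw [mul_one]
        exact Finset.inf'_le x h
      · simpa using hx.1 v
    rw [shiftWeight, mul_sub]
    linarith
  · simp [shiftWeight, Finset.sum_add_distrib, ← Finset.mul_sum, Finset.sum_sub_distrib, hx.2.1]
  · have h1 : v ≠ w := fun h => hv (h ▸ hw)
    have h2 : v ∉ R := fun h => hv (hRτ h)
    simp [shiftWeight, h1, h2, hx.2.2 v hv]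

theorem not_subset_weightSupport_shiftWeight {R : Finset V} (hR : R.Nonempty) {w : V}
    (hw : w ∉ R) (x : V → ℝ) : ¬ R ⊆ weightSupport (shiftWeight R hR w x) := by
  obtain ⟨v, hv, hmin⟩ := Finset.exists_mem_eq_inf' hR x
  have h : v ≠ w := fun h => hw (h ▸ hv)
  exact fun hsub => mem_weightSupport.1 (hsub hv) (by simp [shiftWeight, h, hv, hmin])

theorem shiftWeight_eq_self {R : Finset V} (hR : R.Nonempty) (w : V) {x : V → ℝ}
    (hx : ∀ v, 0 ≤ x v) (hRx : ¬ R ⊆ weightSupport x) : shiftWeight R hR w x = x := by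
  obtain ⟨v, hv, hvx⟩ := Finset.not_subset.1 hRx
  have h0 : R.inf' hR x = 0 := by
    refine le_antisymm ?_ (Finset.le_inf' _ _ fun v _ => hx v)
    rw [mem_weightSupport, not_not] at hvx
    exact hvx ▸ Finset.inf'_le x hv
  ext v
  simp [shiftWeight, h0]

/-- Contractibility of `L` passes to the complex obtained from `L` by adding the interval
`[R, F]` of faces, where `R` is a nonempty proper subset of `F`. -/
theorem ContractsWithin.of_collapse {K K' L L' : Set (Finset V)}
    (hK : ∀ σ ∈ K, ∀ τ ⊆ σ, τ ∈ K) (hK' : ∀ σ ∈ K', ∀ τ ⊆ σ, τ ∈ K')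
    (hL : ∀ σ ∈ L, ∀ τ ⊆ σ, τ ∈ L) {R F : Finset V} (hRF : R ⊂ F) (hR : R.Nonempty)
    (hFK : F ∈ K) (hFK' : F ∈ K') (hLF : ∀ σ ⊆ F, (σ ∈ L ↔ ¬ R ⊆ σ))
    (hL' : ∀ σ ∈ L', σ ∈ L ∨ σ ⊆ F) (h : ContractsWithin K K' L) : ContractsWithin K K' L' := by
  obtain ⟨w, hwF, hwR⟩ := Finset.exists_of_ssubset hRF
  obtain ⟨G, p, hG, G_zero, G_K, G_K', G_one⟩ := h
  obtain ⟨H, hH, H_zero, H_mem, H_one, H_squeeze⟩ :=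
    exists_deformation_extending F (continuous_shiftWeight R hR w)
      fun x hx => shiftWeight_mem hR hRF.1 hwF hx
  refine ⟨fun z => G (z.1, H z), p, by fun_prop, fun x hx => ?_, fun t ht x hx => ?_,
    fun t ht x hx => ?_, fun x hx => ?_⟩
  · simp only [H_zero, G_zero x hx]
  · exact G_K t ht _ (H_mem K hK hFK t ht x hx)
  · exact G_K' t ht _ (H_mem K' hK' hFK' t ht x hx)
  · refine G_one _ ?_
    rcases hL' _ hx.2.2 with hxL | hxF
    · obtain ⟨y, hy, hHy⟩ := H_squeeze x ⟨hx.1, hx.2.1⟩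
      have hyL : y ∈ realization L := closedSimplex_subset_realization hL hxL hy
      suffices H (1, x) = y by rwa [this]
      rcases hHy with hHy | ⟨hyF, s, hHy⟩
      · exact hHy
      · have : ¬ R ⊆ weightSupport y := (hLF _ hyF.2.2).1 hyL.2.2
        rw [hHy, shiftWeight_eq_self hR w hy.1 this, sub_self, smul_zero, add_zero]
    · have hxF' : x ∈ closedSimplex F := ⟨hx.1, hx.2.1, hxF⟩
      have hmem := shiftWeight_mem hR hRF.1 hwF hxF'
      rw [H_one x hxF']
      exact ⟨hmem.1, hmem.2.1,
        (hLF _ hmem.2.2).2 (not_subset_weightSupport_shiftWeight hR hwR x)⟩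

end Realization

/-! ### Combinatorics of shellings -/

section Shelling

variable {V : Type} [DecidableEq V] {t : ℕ}

/-- The restriction of the `k`-th facet of a shelling. -/
def shellingRestriction (F : Fin t → Finset V) (k : Fin t) : Finset V :=
  (F k).filter fun v => ∃ j < k, (F k).erase v ⊆ F j

theorem shellingRestriction_subset (F : Fin t → Finset V) (k : Fin t) :
    shellingRestriction F k ⊆ F k :=
  Finset.filter_subset _ _

/-- The faces of the `k`-th facet which contain its restriction are those which lie in no
previous facet. -/
theorem shellingRestriction_subset_iff {F : Fin t → Finset V} (hF : IsShellingOrder F)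
    {k : Fin t} (hne : (F k).Nonempty) {σ : Finset V} (hσ : σ ⊆ F k) :
    shellingRestriction F k ⊆ σ ↔ ∀ i < k, ¬ σ ⊆ F i := by
  constructor
  · intro hR i hi hσi
    obtain ⟨j, hj, hij, hcard⟩ := hF i k hi
    have hpos := hne.card_pos
    have hlt : F j ∩ F k ⊂ F k := Finset.ssubset_iff_subset_ne.2
      ⟨Finset.inter_subset_right, fun h => by rw [h] at hcard; omega⟩
    obtain ⟨v, hv, hvj⟩ := Finset.exists_of_ssubset hlt
    have hsub : F j ∩ F k = (F k).erase v := by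
      refine Finset.eq_of_subset_of_card_le (fun w hw => Finset.mem_erase.2
        ⟨fun h => hvj (h ▸ hw), (Finset.mem_inter.1 hw).2⟩) ?_
      rw [Finset.card_erase_of_mem hv, hcard]
    have hvR : v ∈ shellingRestriction F k :=
      Finset.mem_filter.2 ⟨hv, j, hj, hsub ▸ Finset.inter_subset_left⟩
    exact hvj (hij (Finset.mem_inter.2 ⟨hσi (hR hvR), hv⟩))
  · intro h v hv
    obtain ⟨-, j, hj, hsub⟩ := Finset.mem_filter.1 hv
    by_contra hvσ
    exact h j hj fun w hw => hsub (Finset.mem_erase.2 ⟨fun h => hvσ (h ▸ hw), hσ hw⟩)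

theorem sum_Icc_neg_one_pow_card {R F : Finset V} (h : R ⊆ F) :
    ∑ σ ∈ Finset.Icc R F, (-1 : ℤ) ^ (σ.card + 1) =
      if R = F then (-1) ^ (F.card + 1) else 0 := by
  split_ifs with hRF
  · simp [hRF]
  · have hne : (F \ R).Nonempty := Finset.sdiff_nonempty.2 fun h' => hRF (h.antisymm h')
    have hdisj (σ) (hσ : σ ∈ (F \ R).powerset) : Disjoint R σ :=
      Finset.disjoint_of_subset_right (Finset.mem_powerset.1 hσ) Finset.disjoint_sdiff
    rw [Finset.Icc_eq_image_powerset h, Finset.sum_image]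
    · rw [Finset.sum_congr rfl fun σ hσ => show (-1 : ℤ) ^ ((R ∪ σ).card + 1) =
          (-1) ^ (R.card + 1) * (-1) ^ σ.card by
        rw [Finset.card_union_of_disjoint (hdisj σ hσ), ← pow_add, add_right_comm]]
      rw [← Finset.mul_sum, Finset.sum_powerset_neg_one_pow_card_of_nonempty hne, mul_zero]
    · intro σ hσ τ hτ hστ
      rw [← Finset.union_sdiff_cancel_left (hdisj σ hσ),
        ← Finset.union_sdiff_cancel_left (hdisj τ hτ)]
      exact congrArg (· \ R) hστ

/-- The absolute value of the reduced Euler characteristic of a shellable complex is the number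
of facets which are equal to their restriction. -/
theorem natAbs_sum_eq_card_restriction_eq [Fintype V] {K : Set (Finset V)} {d : ℕ}
    {F : Fin t → Finset V} (hF : IsShellingOrder F) (hcard : ∀ k, (F k).card = d + 1)
    (hKF : ∀ σ, σ ∈ K ↔ ∃ k, σ ⊆ F k) :
    (∑ σ ∈ Finset.univ.filter (fun σ : Finset V => σ ∈ K), (-1 : ℤ) ^ (σ.card + 1)).natAbs =
      Fintype.card {k // shellingRestriction F k = F k} := by
  have hne (k) : (F k).Nonempty := Finset.card_pos.1 (by rw [hcard]; omega)
  have hunion : Finset.univ.filter (fun σ : Finset V => σ ∈ K) =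
      Finset.univ.biUnion fun k => Finset.Icc (shellingRestriction F k) (F k) := by
    ext σ
    simp only [Finset.mem_filter, Finset.mem_univ, true_and, Finset.mem_biUnion, Finset.mem_Icc,
      hKF]
    constructor
    · intro h
      obtain ⟨k, hk, hmin⟩ := WellFounded.has_min (wellFounded_lt (α := Fin t))
        {k | σ ⊆ F k} h
      exact ⟨k, (shellingRestriction_subset_iff hF (hne k) hk).2
        fun i hi hσi => hmin i hσi hi, hk⟩
    · rintro ⟨k, -, hk⟩
      exact ⟨k, hk⟩
  have hdisj : Set.PairwiseDisjoint (Finset.univ : Finset (Fin t))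
      fun k => Finset.Icc (shellingRestriction F k) (F k) := by
    have key (i k : Fin t) (hik : i < k) : Disjoint
        (Finset.Icc (shellingRestriction F i) (F i))
        (Finset.Icc (shellingRestriction F k) (F k)) := by
      refine Finset.disjoint_left.2 fun σ hi hk => ?_
      rw [Finset.mem_Icc] at hi hk
      exact (shellingRestriction_subset_iff hF (hne k) hk.2).1 hk.1 i hik hi.2
    intro i _ k _ hik
    rcases lt_or_gt_of_ne hik with h | h
    · exact key i k h
    · exact (key k i h).symm
  rw [hunion, Finset.sum_biUnion hdisj,
    Finset.sum_congr rfl fun k _ => sum_Icc_neg_one_pow_card (shellingRestriction_subset F k)]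
  simp only [hcard]
  rw [← Finset.sum_filter, Finset.sum_const, Fintype.card_subtype, nsmul_eq_mul, Int.natAbs_mul,
    Int.natAbs_pow]
  simp

/-- The subcomplex of a shellable complex without the facets equal to their restriction is
contractible by an ambient deformation. -/
theorem contractsWithin_of_isShellingOrder [Fintype V] {K K' : Set (Finset V)}
    {F : Fin t → Finset V} (hF : IsShellingOrder F) (hne : ∀ k, (F k).Nonempty)
    (hK : ∀ σ ∈ K, ∀ τ ⊆ σ, τ ∈ K) (hK' : ∀ σ ∈ K', ∀ τ ⊆ σ, τ ∈ K') (ht : 0 < t)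
    (hKF : ∀ σ, σ ∈ K ↔ ∃ k, σ ⊆ F k) (hsub : K' ⊆ K)
    (hFK' : ∀ k, F k ∈ K' ↔ shellingRestriction F k ≠ F k) : ContractsWithin K K' K' := by
  have hFK (k) : F k ∈ K := (hKF _).2 ⟨k, Finset.Subset.refl _⟩
  let L (n : ℕ) : Set (Finset V) := {σ | σ ∈ K' ∧ ∃ k : Fin t, k.val < n ∧ σ ⊆ F k}
  have hL (n) : ∀ σ ∈ L n, ∀ τ ⊆ σ, τ ∈ L n := fun σ ⟨hσ, k, hk, hσk⟩ τ hτ =>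
    ⟨hK' σ hσ τ hτ, k, hk, hτ.trans hσk⟩
  have hstep (n : ℕ) (hn : n < t) : ContractsWithin K K' (L (n + 1)) := by
    induction n with
    | zero =>
      refine contractsWithin_simplex hK hK' (hFK ⟨0, hn⟩) ((hFK' _).2 fun h => ?_)
        (hne ⟨0, hn⟩) ?_
      · obtain ⟨v, hv⟩ := hne ⟨0, hn⟩
        rw [← h] at hv
        obtain ⟨-, j, hj, -⟩ := Finset.mem_filter.1 hv
        exact absurd hj (Nat.not_lt_zero _)
      · rintro σ ⟨-, k, hk, hσk⟩
        obtain rfl : k = ⟨0, hn⟩ := Fin.ext (by simpa using hk)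
        exact hσk
    | succ n ih =>
      have ih := ih (by omega)
      let k : Fin t := ⟨n + 1, hn⟩
      have hLF (σ) (hσ : σ ∈ K') (hσk : σ ⊆ F k) :
          σ ∈ L (n + 1) ↔ ¬ shellingRestriction F k ⊆ σ := by
        rw [shellingRestriction_subset_iff hF (hne k) hσk]
        push Not
        exact ⟨fun ⟨_, i, hi, hσi⟩ => ⟨i, hi, hσi⟩, fun ⟨i, hi, hσi⟩ => ⟨hσ, i, hi, hσi⟩⟩
      have hsucc (σ) (hσ : σ ∈ L (n + 1 + 1)) : σ ∈ L (n + 1) ∨ σ ⊆ F k := by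
        obtain ⟨hσ, i, hi, hσi⟩ := hσ
        rcases Nat.lt_succ_iff_lt_or_eq.1 hi with hi | hi
        · exact Or.inl ⟨hσ, i, hi, hσi⟩
        · obtain rfl : i = k := Fin.ext hi
          exact Or.inr hσi
      by_cases hk : F k ∈ K'
      · refine ih.of_collapse hK hK' (hL _) (Finset.ssubset_iff_subset_ne.2
          ⟨shellingRestriction_subset F k, (hFK' k).1 hk⟩) ?_ (hFK k) hk
          (fun σ hσ => hLF σ (hK' _ hk σ hσ) hσ) hsucc
        rw [Finset.nonempty_iff_ne_empty]
        intro h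
        exact (shellingRestriction_subset_iff hF (hne k) (Finset.empty_subset _)).1 h.subset
          ⟨0, ht⟩ (Nat.succ_pos n) (Finset.empty_subset _)
      · have hkR : shellingRestriction F k = F k := not_not.1 fun h => hk ((hFK' k).2 h)
        have hLL : L (n + 1 + 1) ⊆ L (n + 1) := fun σ hσ => (hsucc σ hσ).elim id fun hσk =>
          (hLF σ hσ.1 hσk).2 fun h => hk (hσk.antisymm (hkR ▸ h) ▸ hσ.1)
        obtain ⟨H, p, h1, h2, h3, h4, h5⟩ := ih
        exact ⟨H, p, h1, h2, h3, h4, fun x hx => h5 x (realization_mono hLL hx)⟩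
  obtain ⟨H, p, h1, h2, h3, h4, h5⟩ := hstep (t - 1) (by omega)
  refine ⟨H, p, h1, h2, h3, h4, fun x hx => h5 x (realization_mono (fun σ hσ => ?_) hx)⟩
  obtain ⟨k, hk⟩ := (hKF σ).1 (hsub hσ)
  exact ⟨hσ, k, by omega, hk⟩

end Shelling

theorem exists_isFacet_superset {V : Type} [Finite V] {K : Set (Finset V)} {σ : Finset V}
    (hσ : σ ∈ K) : ∃ τ, IsFacet K τ ∧ σ ⊆ τ := by
  obtain ⟨τ, hτ, hmax⟩ := K.toFinite.exists_le_maximal hσ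
  exact ⟨τ, ⟨hmax.prop, fun ρ hρ h => h.antisymm (hmax.2 hρ h)⟩, hτ⟩

/-- A shellable pure `d`-dimensional simplicial complex which is not a simplex
has geometric realization homotopy equivalent to a wedge of `r` copies of the
`d`-sphere, where `r` is the absolute value of the reduced Euler characteristic
`χ̃ = ∑_{σ ∈ K, including ∅} (-1)^{dim σ}`. -/
theorem shellable_homotopyEquiv_wedge {V : Type} [Fintype V] [DecidableEq V]
    (K : Set (Finset V)) (d : ℕ)
    (hdown : ∀ σ ∈ K, ∀ τ ⊆ σ, τ ∈ K)
    (hempty : ∅ ∈ K)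
    (hpure : ∀ σ, IsFacet K σ → σ.card = d + 1)
    (t : ℕ) (F : Fin t → Finset V) (hFinj : Function.Injective F)
    (hFfacets : ∀ σ, IsFacet K σ ↔ ∃ m, F m = σ)
    (hshell : IsShellingOrder F)
    (hnotsimplex : ¬ ∃ A : Finset V, K = {σ | σ ⊆ A}) :
    Nonempty (ContinuousMap.HomotopyEquiv ↥(realization K)
      (WedgeOfSpheres
        (∑ σ ∈ Finset.univ.filter (fun σ : Finset V => σ ∈ K),
          (-1 : ℤ) ^ (σ.card + 1)).natAbs d)) := by
  have hfacet (k) : IsFacet K (F k) := (hFfacets _).2 ⟨k, rfl⟩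
  have hcard (k) : (F k).card = d + 1 := hpure _ (hfacet k)
  have hne (k) : (F k).Nonempty := Finset.card_pos.1 (by rw [hcard]; omega)
  have hKF (σ) : σ ∈ K ↔ ∃ k, σ ⊆ F k := by
    refine ⟨fun hσ => ?_, fun ⟨k, hk⟩ => hdown _ (hfacet k).1 σ hk⟩
    obtain ⟨τ, hτ, hστ⟩ := exists_isFacet_superset hσ
    obtain ⟨k, rfl⟩ := (hFfacets τ).1 hτ
    exact ⟨k, hστ⟩
  have ht : 0 < t := by
    obtain ⟨k, -⟩ := (hKF ∅).1 hempty
    exact k.pos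
  rw [natAbs_sum_eq_card_restriction_eq hshell hcard hKF]
  set r := Fintype.card {k // shellingRestriction F k = F k}
  let e : Fin r ≃ {k // shellingRestriction F k = F k} := (Fintype.equivFin _).symm
  let G (i : Fin r) : Finset V := F (e i)
  let K' : Set (Finset V) := {σ | σ ∈ K ∧ ∀ i, G i ≠ σ}
  have hK' : ∀ σ ∈ K', ∀ τ ⊆ σ, τ ∈ K' := fun σ hσ τ hτ =>
    ⟨hdown σ hσ.1 τ hτ, fun i hi => hσ.2 i ((hfacet (e i)).2 σ hσ.1 (hi.subset.trans hτ))⟩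
  have hFK' (k) : F k ∈ K' ↔ shellingRestriction F k ≠ F k := by
    refine ⟨fun h hk => h.2 (e.symm ⟨k, hk⟩) (by simp [G]), fun h => ⟨(hfacet k).1, fun i hi => ?_⟩⟩
    exact h (hFinj hi ▸ (e i).2)
  obtain ⟨H, p, hH, H_zero, H_K, H_K', H_one⟩ :=
    contractsWithin_of_isShellingOrder hshell hne hdown hK' ht hKF (fun σ hσ => hσ.1) hFK'
  obtain ⟨g, hg, hrange⟩ := exists_isOpenEmbedding_cells (K := K) G
    (hFinj.comp (Subtype.val_injective.comp e.injective)) (fun i => hfacet (e i))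
    fun i => hcard (e i)
  let A : Set (realization K) := {x | x.1 ∈ realization K'}
  have hA (x : realization K) : x ∉ Set.range g ↔ x ∈ A := by
    rw [hrange, not_exists]
    exact ⟨fun h => ⟨x.2.1, x.2.2.1, x.2.2.2, h⟩, fun h => h.2.2.2⟩
  obtain ⟨v, hv⟩ := hne ⟨0, ht⟩
  have hvK' : {v} ∈ K' := by
    refine hK' (F ⟨0, ht⟩) ((hFK' _).2 fun h => ?_) _ (Finset.singleton_subset_iff.2 hv)
    rw [← h] at hv
    obtain ⟨-, j, hj, -⟩ := Finset.mem_filter.1 hv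
    exact absurd hj (Nat.not_lt_zero _)
  have hx₀ : (Pi.single v 1 : V → ℝ) ∈ realization K' := by
    refine ⟨(single_mem_stdSimplex ℝ v).1, (single_mem_stdSimplex ℝ v).2, ?_⟩
    convert hvK'
    ext w
    simp [Pi.single_apply]
  let x₀ : realization K := ⟨Pi.single v 1, realization_mono (fun σ hσ => hσ.1) hx₀⟩
  have hx₀A : x₀ ∈ A := hx₀
  have : CompactSpace (realization K) := isCompact_iff_compactSpace.1 (isCompact_realization hdown)
  obtain ⟨φ⟩ := nonempty_homotopyEquiv_of_deformation (A := A)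
    (⟨collapse g, continuous_collapse hg⟩ : C(realization K, _))
    (collapse_surjective hg.injective ((hA x₀).2 hx₀A))
    (fun x y => by rw [← hA, ← hA]; exact collapse_eq_iff hg.injective)
    ⟨fun z => ⟨H (z.1, z.2), H_K z.1 z.1.2 z.2 z.2.2⟩, by fun_prop⟩
    (fun x => Subtype.ext (H_zero x x.2)) (fun t x hx => H_K' t t.2 x hx)
    ⟨H (1, x₀), H_K 1 (by simp) x₀ x₀.2⟩
    (fun x hx => Subtype.ext ((H_one x hx).trans (H_one x₀ hx₀A).symm))
  obtain ⟨ψ⟩ := nonempty_wedgeOfSpheres_homeomorph r d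
  exact ⟨φ.trans ψ.symm.toHomotopyEquiv⟩
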